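/- Let U ⊆ ℝ³ be open and connected, let ψ : U → ℝ³ be smooth with invertible derivative Dψ(x) at every point, and let σ̊ : U → ℝ^{3×3} be a smooth field of symmetric matrices. If the pair (ψ, σ̊) is universal, then each of the ten invariants I₁, …, I₁₀ is constant on U. -/

import Mathlib

open Matrix

/-- The Jacobian matrix (derivative) of a map `ψ : ℝ³ → ℝ³` at a point. -/
noncomputable def jac (ψ : (Fin 3 → ℝ) → (Fin 3 → ℝ)) (x : Fin 3 → ℝ) :
    Matrix (Fin 3) (Fin 3) ℝ :=
  fun i j => fderiv ℝ ψ x (Pi.single j 1) i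

/-- Divergence of a matrix field: `(div T)_i = Σ_j ∂T_{ij}/∂x_j`. -/
noncomputable def mdiv (T : (Fin 3 → ℝ) → Matrix (Fin 3) (Fin 3) ℝ) (x : Fin 3 → ℝ) :
    Fin 3 → ℝ :=
  fun i => ∑ j, fderiv ℝ (fun y => T y i j) x (Pi.single j 1)

/-- Left Cauchy–Green tensor `b = F Fᵀ` with `F = (Dψ)⁻¹`. -/
noncomputable def bField (ψ : (Fin 3 → ℝ) → (Fin 3 → ℝ)) (x : Fin 3 → ℝ) :
    Matrix (Fin 3) (Fin 3) ℝ :=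
  (jac ψ x)⁻¹ * ((jac ψ x)⁻¹)ᵀ

/-- `c = b⁻¹ = Dψᵀ Dψ`. -/
noncomputable def cField (ψ : (Fin 3 → ℝ) → (Fin 3 → ℝ)) (x : Fin 3 → ℝ) :
    Matrix (Fin 3) (Fin 3) ℝ :=
  (jac ψ x)ᵀ * jac ψ x

/-- The ten invariants of the pair `(b, σ̊)`. -/
noncomputable def invariants (b σ : Matrix (Fin 3) (Fin 3) ℝ) : Fin 10 → ℝ :=
  ![b.trace, (b.trace ^ 2 - (b * b).trace) / 2, b.det,
    σ.trace, (σ * σ).trace, (σ * σ * σ).trace,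
    (b * σ).trace, (b * b * σ).trace, (b * σ * σ).trace, (b * b * σ * σ).trace]

/-- The Cauchy stress built from response functions `α₀,…,α₇` and tensors `b`, `c`, `σ̊`. -/
noncomputable def cauchyStress (α : Fin 8 → (Fin 10 → ℝ) → ℝ)
    (b c σ : Matrix (Fin 3) (Fin 3) ℝ) : Matrix (Fin 3) (Fin 3) ℝ :=
  α 0 (invariants b σ) • (1 : Matrix (Fin 3) (Fin 3) ℝ)
    + α 1 (invariants b σ) • b + α 2 (invariants b σ) • c
    + α 3 (invariants b σ) • σ + α 4 (invariants b σ) • (σ * σ)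
    + α 5 (invariants b σ) • (b * σ + σ * b)
    + α 6 (invariants b σ) • (c * σ + σ * c)
    + α 7 (invariants b σ) • (b * σ * σ + σ * σ * b)

/-- `(ψ, σ̊)` is universal: for all smooth response functions, the Cauchy stress is
divergence-free on `U`. -/
def IsUniversal (U : Set (Fin 3 → ℝ)) (ψ : (Fin 3 → ℝ) → (Fin 3 → ℝ))
    (σ0 : (Fin 3 → ℝ) → Matrix (Fin 3) (Fin 3) ℝ) : Prop :=
  ∀ α : Fin 8 → (Fin 10 → ℝ) → ℝ, (∀ i, ContDiff ℝ (⊤ : ℕ∞) (α i)) →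
    ∀ x ∈ U, mdiv (fun y => cauchyStress α (bField ψ y) (cField ψ y) (σ0 y)) x = 0

/-! The pressure term `α₀ • Id` alone forces the conclusion. Since `div (p • Id) = ∇p`, testing
universality with `α₀ = p` and `α₁ = ⋯ = α₇ = 0` shows that `p (I₁, …, I₁₀)` has zero gradient on
`U`. Taking for `p` the ten coordinate functions, every invariant is locally constant. -/

section MatrixFields

variable {𝕜 E m n p : Type*} [NontriviallyNormedField 𝕜] [NormedAddCommGroup E] [NormedSpace 𝕜 E]
  {x : E}

theorem differentiableAt_matrix [Finite n] {A : E → Matrix m n 𝕜} :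
    DifferentiableAt 𝕜 A x ↔ ∀ i j, DifferentiableAt 𝕜 (fun y => A y i j) x := by
  have := Fintype.ofFinite n
  exact differentiableAt_pi.trans <| forall_congr' fun _ => differentiableAt_pi

theorem differentiableAt_matrix_transpose [Finite m] [Finite n] {A : E → Matrix m n 𝕜}
    (hA : DifferentiableAt 𝕜 A x) : DifferentiableAt 𝕜 (fun y => (A y)ᵀ) x :=
  differentiableAt_matrix.2 fun i j => differentiableAt_matrix.1 hA j i

theorem differentiableAt_matrix_mul [Fintype n] [Finite p] {A : E → Matrix m n 𝕜}
    {B : E → Matrix n p 𝕜} (hA : DifferentiableAt 𝕜 A x) (hB : DifferentiableAt 𝕜 B x) :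
    DifferentiableAt 𝕜 (fun y => A y * B y) x := by
  rw [differentiableAt_matrix] at hA hB ⊢
  simp only [mul_apply]
  exact fun i j => .fun_sum fun k _ => (hA i k).mul (hB k j)

theorem differentiableAt_matrix_trace [Fintype n] {A : E → Matrix n n 𝕜}
    (hA : DifferentiableAt 𝕜 A x) : DifferentiableAt 𝕜 (fun y => (A y).trace) x :=
  .fun_sum fun i _ => differentiableAt_matrix.1 hA i i

theorem differentiableAt_matrix_det [Fintype n] [DecidableEq n] {A : E → Matrix n n 𝕜}
    (hA : DifferentiableAt 𝕜 A x) : DifferentiableAt 𝕜 (fun y => (A y).det) x := by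
  rw [differentiableAt_matrix] at hA
  simp only [det_apply']
  fun_prop

theorem differentiableAt_matrix_adjugate [Fintype n] [DecidableEq n] {A : E → Matrix n n 𝕜}
    (hA : DifferentiableAt 𝕜 A x) : DifferentiableAt 𝕜 (fun y => (A y).adjugate) x := by
  refine differentiableAt_matrix.2 fun i j => ?_
  simp only [adjugate_apply]
  refine differentiableAt_matrix_det (differentiableAt_matrix.2 fun k l => ?_)
  obtain rfl | hkj := eq_or_ne k j
  · simp only [updateRow_self, differentiableAt_const]
  · simpa only [updateRow_ne hkj] using differentiableAt_matrix.1 hA k l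

theorem differentiableAt_matrix_inv [Fintype n] [DecidableEq n] {A : E → Matrix n n 𝕜}
    (hA : DifferentiableAt 𝕜 A x) (hdet : (A x).det ≠ 0) :
    DifferentiableAt 𝕜 (fun y => (A y)⁻¹) x := by
  refine differentiableAt_matrix.2 fun i j => ?_
  simp only [inv_def, Ring.inverse_eq_inv', Matrix.smul_apply, smul_eq_mul]
  exact ((differentiableAt_matrix_det hA).fun_inv hdet).mul
    (differentiableAt_matrix.1 (differentiableAt_matrix_adjugate hA) i j)

end MatrixFields

section Invariants

variable {ψ : (Fin 3 → ℝ) → (Fin 3 → ℝ)} {x : Fin 3 → ℝ}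

theorem differentiableAt_jac (hψ : ContDiffAt ℝ 2 ψ x) : DifferentiableAt ℝ (jac ψ) x := by
  have hfderiv : DifferentiableAt ℝ (fderiv ℝ ψ) x :=
    (hψ.fderiv_right (m := 1) (by norm_num)).differentiableAt one_ne_zero
  exact differentiableAt_matrix.2 fun i j =>
    differentiableAt_pi.1 (hfderiv.clm_apply (differentiableAt_const (Pi.single j 1))) i

theorem differentiableAt_bField (hψ : ContDiffAt ℝ 2 ψ x) (hdet : (jac ψ x).det ≠ 0) :
    DifferentiableAt ℝ (bField ψ) x :=
  have hF := differentiableAt_matrix_inv (differentiableAt_jac hψ) hdet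
  differentiableAt_matrix_mul hF (differentiableAt_matrix_transpose hF)

theorem differentiableAt_invariants {E : Type*} [NormedAddCommGroup E] [NormedSpace ℝ E]
    {b σ : E → Matrix (Fin 3) (Fin 3) ℝ} {x : E} (hb : DifferentiableAt ℝ b x)
    (hσ : DifferentiableAt ℝ σ x) : DifferentiableAt ℝ (fun y => invariants (b y) (σ y)) x := by
  have hbb := differentiableAt_matrix_mul hb hb
  have hσσ := differentiableAt_matrix_mul hσ hσ
  have hbσ := differentiableAt_matrix_mul hb hσ
  have hbbσ := differentiableAt_matrix_mul hbb hσ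
  have hI₂ : DifferentiableAt ℝ (fun y => ((b y).trace ^ 2 - (b y * b y).trace) / 2) x := by
    have htr_b := differentiableAt_matrix_trace hb
    have htr_bb := differentiableAt_matrix_trace hbb
    fun_prop
  refine differentiableAt_pi.2 fun k => ?_
  fin_cases k
  · exact differentiableAt_matrix_trace hb
  · exact hI₂
  · exact differentiableAt_matrix_det hb
  · exact differentiableAt_matrix_trace hσ
  · exact differentiableAt_matrix_trace hσσ
  · exact differentiableAt_matrix_trace (differentiableAt_matrix_mul hσσ hσ)
  · exact differentiableAt_matrix_trace hbσ
  · exact differentiableAt_matrix_trace hbbσ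
  · exact differentiableAt_matrix_trace (differentiableAt_matrix_mul hbσ hσ)
  · exact differentiableAt_matrix_trace (differentiableAt_matrix_mul hbbσ hσ)

end Invariants

section Universality

theorem mdiv_smul_one (p : (Fin 3 → ℝ) → ℝ) (x : Fin 3 → ℝ) (i : Fin 3) :
    mdiv (fun y => p y • (1 : Matrix (Fin 3) (Fin 3) ℝ)) x i = fderiv ℝ p x (Pi.single i 1) := by
  rw [mdiv, Finset.sum_eq_single i]
  · simp
  · intro j _ hji
    simp [one_apply_ne hji.symm]
  · simp

theorem fderiv_eq_zero_of_mdiv_smul_one_eq_zero {p : (Fin 3 → ℝ) → ℝ} {x : Fin 3 → ℝ}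
    (hp : mdiv (fun y => p y • (1 : Matrix (Fin 3) (Fin 3) ℝ)) x = 0) : fderiv ℝ p x = 0 := by
  refine ContinuousLinearMap.coe_injective (LinearMap.pi_ext' fun i => LinearMap.ext_ring ?_)
  exact (mdiv_smul_one p x i).symm.trans (congrFun hp i)

theorem cauchyStress_single_zero (p : (Fin 10 → ℝ) → ℝ) (b c σ : Matrix (Fin 3) (Fin 3) ℝ) :
    cauchyStress (Pi.single 0 p) b c σ = p (invariants b σ) • 1 := by
  simp [cauchyStress]

/-- Universality tested against pressure stresses `p (I₁, …, I₁₀) • Id` only, that is, with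
`α₀ = p` and `α₁ = ⋯ = α₇ = 0`. -/
def IsPressureUniversal (U : Set (Fin 3 → ℝ)) (ψ : (Fin 3 → ℝ) → (Fin 3 → ℝ))
    (σ0 : (Fin 3 → ℝ) → Matrix (Fin 3) (Fin 3) ℝ) : Prop :=
  ∀ p : (Fin 10 → ℝ) → ℝ, ContDiff ℝ (⊤ : ℕ∞) p → ∀ x ∈ U,
    mdiv (fun y => p (invariants (bField ψ y) (σ0 y)) • (1 : Matrix (Fin 3) (Fin 3) ℝ)) x = 0

variable {U : Set (Fin 3 → ℝ)} {ψ : (Fin 3 → ℝ) → (Fin 3 → ℝ)}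
  {σ0 : (Fin 3 → ℝ) → Matrix (Fin 3) (Fin 3) ℝ}

theorem IsUniversal.isPressureUniversal (h : IsUniversal U ψ σ0) : IsPressureUniversal U ψ σ0 := by
  intro p hp x hx
  have hα : ∀ i, ContDiff ℝ (⊤ : ℕ∞) ((Pi.single 0 p : Fin 8 → (Fin 10 → ℝ) → ℝ) i) :=
    Fin.cases hp fun _ => contDiff_const
  simpa only [cauchyStress_single_zero] using h (Pi.single 0 p) hα x hx

theorem IsPressureUniversal.fderiv_invariants_apply_eq_zero (h : IsPressureUniversal U ψ σ0)
    {x : Fin 3 → ℝ} (hx : x ∈ U) (k : Fin 10) :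
    fderiv ℝ (fun y => invariants (bField ψ y) (σ0 y) k) x = 0 :=
  fderiv_eq_zero_of_mdiv_smul_one_eq_zero (h (fun v => v k) (contDiff_apply ℝ ℝ k) x hx)

end Universality

theorem universal_implies_constant_invariants_general {U : Set (Fin 3 → ℝ)} (hUopen : IsOpen U)
    (hUconn : IsPreconnected U) {ψ : (Fin 3 → ℝ) → (Fin 3 → ℝ)} (hψ : ContDiffOn ℝ 2 ψ U)
    (hinv : ∀ x ∈ U, (jac ψ x).det ≠ 0) {σ0 : (Fin 3 → ℝ) → Matrix (Fin 3) (Fin 3) ℝ}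
    (hσ : ∀ i j, DifferentiableOn ℝ (fun x => σ0 x i j) U) (huniv : IsPressureUniversal U ψ σ0) :
    ∀ x ∈ U, ∀ y ∈ U,
      invariants (bField ψ x) (σ0 x) = invariants (bField ψ y) (σ0 y) := by
  have hdiff : ∀ z ∈ U, DifferentiableAt ℝ (fun y => invariants (bField ψ y) (σ0 y)) z := by
    intro z hz
    have hU := hUopen.mem_nhds hz
    exact differentiableAt_invariants (differentiableAt_bField (hψ.contDiffAt hU) (hinv z hz))
      (differentiableAt_matrix.2 fun i j => (hσ i j).differentiableAt hU)
  intro x hx y hy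
  funext k
  exact hUopen.is_const_of_fderiv_eq_zero (𝕜 := ℝ) hUconn
    (fun z hz => (differentiableAt_pi.1 (hdiff z hz) k).differentiableWithinAt)
    (fun z hz => huniv.fderiv_invariants_apply_eq_zero hz k) hx hy

/-- For a universal pair `(ψ, σ̊)` on an open connected `U ⊆ ℝ³`,
all ten invariants `I₁, …, I₁₀` are constant on `U`. -/
theorem universal_implies_constant_invariants
    (U : Set (Fin 3 → ℝ)) (hUopen : IsOpen U) (hUconn : IsConnected U)
    (ψ : (Fin 3 → ℝ) → (Fin 3 → ℝ)) (hψ : ContDiffOn ℝ (⊤ : ℕ∞) ψ U)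
    (hinv : ∀ x ∈ U, (jac ψ x).det ≠ 0)
    (σ0 : (Fin 3 → ℝ) → Matrix (Fin 3) (Fin 3) ℝ)
    (hσsmooth : ∀ i j, ContDiffOn ℝ (⊤ : ℕ∞) (fun x => σ0 x i j) U)
    (hσsym : ∀ x ∈ U, (σ0 x)ᵀ = σ0 x)
    (huniv : IsUniversal U ψ σ0) :
    ∀ x ∈ U, ∀ y ∈ U,
      invariants (bField ψ x) (σ0 x) = invariants (bField ψ y) (σ0 y) :=
  universal_implies_constant_invariants_general hUopen hUconn.isPreconnected
    (hψ.of_le (by norm_cast)) hinv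
    (fun i j => (hσsmooth i j).differentiableOn (by simp)) huniv.isPressureUniversal
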